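/- There exists a 2-(24,4,1) packing with 42 blocks whose leave is a vertex-disjoint union of two cycles of length 12, covering all 24 points (leave type 12^2). -/

import Mathlib

/-!
The packing is explicit. Label the points `0, …, 23` so that the two cycles of the leave are
`0, 1, …, 11` and `12, 13, …, 23`, each in cyclic order. The 42 blocks form a union of orbits of
the cyclic group of order 4 generated by the map exchanging the two cycles via
`x ↦ 12 + (7 - x)` and `12 + y ↦ y + 3` (`x`, `y` taken mod 12), although the proof does
not use this symmetry.

What remains is a finite verification on the list of blocks: each block has four distinct points,
two different blocks share at most one point (`blockList_pairwise`), and the pairs lying in no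
block are exactly the pairs `{p, next p}`, where `next` is the successor along the two cycles
(`leave_iff_next`). The other lemmas translate these facts into the language of finsets and of
cycles parametrized by `ZMod 12`.
-/

/-- A 2-(24,4,1) packing: a collection of 4-element blocks on 24 points such that
every pair of distinct points lies in at most one block. -/
def IsPacking (B : Finset (Finset (Fin 24))) : Prop :=
  (∀ b ∈ B, b.card = 4) ∧
  ∀ p q : Fin 24, p ≠ q → ∀ b₁ ∈ B, ∀ b₂ ∈ B,
    p ∈ b₁ → q ∈ b₁ → p ∈ b₂ → q ∈ b₂ → b₁ = b₂

/-- Adjacency in the leave of a packing: the pair of distinct points is covered by no block. -/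
def LeaveAdj (B : Finset (Finset (Fin 24))) (p q : Fin 24) : Prop :=
  p ≠ q ∧ ∀ b ∈ B, ¬ (p ∈ b ∧ q ∈ b)

/-- The leave of the packing `B` is a vertex-disjoint union of cycles whose lengths are
given by the list `L`, covering all 24 points. -/
def LeaveIsCycleType (B : Finset (Finset (Fin 24))) (L : List ℕ) : Prop :=
  ∃ f : (i : Fin L.length) → ZMod (L.get i) → Fin 24,
    Function.Bijective (fun x : Σ i : Fin L.length, ZMod (L.get i) => f x.1 x.2) ∧
    ∀ p q : Fin 24, LeaveAdj B p q ↔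
      ∃ i k, (p = f i k ∧ q = f i (k + 1)) ∨ (q = f i k ∧ p = f i (k + 1))

/-- The 42 blocks of the packing, as lists. -/
def blockList : List (List (Fin 24)) :=
  [ [0, 2, 8, 10], [17, 19, 21, 23], [7, 10, 18, 21], [0, 3, 19, 22], [0, 9, 12, 21],
    [1, 10, 16, 19], [0, 4, 7, 15], [6, 12, 15, 19], [4, 13, 16, 21], [3, 6, 10, 13],
    [0, 5, 16, 23], [5, 10, 12, 17], [2, 7, 14, 19], [3, 8, 14, 21], [4, 10, 14, 23],
    [0, 6, 14, 17], [5, 8, 13, 19], [2, 5, 15, 21], [4, 9, 11, 19], [10, 15, 20, 22],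
    [0, 13, 18, 20], [1, 6, 11, 21], [7, 9, 17, 20], [2, 11, 16, 18], [8, 11, 12, 22],
    [1, 3, 20, 23], [2, 13, 17, 22], [1, 4, 8, 17], [2, 6, 9, 23], [8, 15, 18, 23],
    [3, 5, 9, 18], [1, 5, 7, 22], [9, 14, 16, 22], [1, 12, 14, 18], [1, 9, 13, 15],
    [4, 6, 18, 22], [6, 8, 16, 20], [7, 11, 13, 23], [2, 4, 12, 20], [3, 11, 15, 17],
    [3, 7, 12, 16], [5, 11, 14, 20] ]

/-- The blocks of the packing. -/
def packingBlocks : Finset (Finset (Fin 24)) :=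
  (blockList.map List.toFinset).toFinset

/-- The successor of a point along its cycle of the leave. -/
def next (p : Fin 24) : Fin 24 :=
  if p = 11 then 0 else if p = 23 then 12 else p + 1

/-- The `k`-th point of the `i`-th cycle of the leave. -/
def cyclePoint (i : Fin 2) (k : ZMod 12) : Fin 24 :=
  Fin.ofNat 24 (12 * i.val + k.val)

theorem mem_packingBlocks {b : Finset (Fin 24)} :
    b ∈ packingBlocks ↔ ∃ l ∈ blockList, l.toFinset = b := by
  simp [packingBlocks]

theorem blockList_nodup_length : ∀ l ∈ blockList, l.Nodup ∧ l.length = 4 := by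
  decide +kernel

theorem blockList_pairwise :
    blockList.Pairwise fun l m => (l.filter (· ∈ m)).length ≤ 1 := by
  decide +kernel

theorem leave_iff_next : ∀ p q : Fin 24,
    (p ≠ q ∧ ∀ l ∈ blockList, ¬ (p ∈ l ∧ q ∈ l)) ↔ (q = next p ∨ p = next q) := by
  decide +kernel

theorem cyclePoint_bijective :
    Function.Bijective (fun x : Fin 2 × ZMod 12 => cyclePoint x.1 x.2) := by
  decide +kernel

theorem cyclePoint_add_one : ∀ i k, cyclePoint i (k + 1) = next (cyclePoint i k) := by
  decide +kernel

theorem card_toFinset_of_mem {l : List (Fin 24)} (hl : l ∈ blockList) : l.toFinset.card = 4 := by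
  obtain ⟨hnd, hlen⟩ := blockList_nodup_length l hl
  rw [List.toFinset_card_of_nodup hnd, hlen]

theorem blocks_pairwise_inter :
    blockList.Pairwise fun l m => (l.toFinset ∩ m.toFinset).card ≤ 1 := by
  refine blockList_pairwise.imp fun {l m} h => ?_
  have hsub : l.toFinset ∩ m.toFinset = (l.filter (· ∈ m)).toFinset := by
    ext x; simp
  rw [hsub]
  exact (List.toFinset_card_le _).trans h

theorem blocks_inter {b₁ b₂ : Finset (Fin 24)} (h₁ : b₁ ∈ packingBlocks)
    (h₂ : b₂ ∈ packingBlocks) (hne : b₁ ≠ b₂) : (b₁ ∩ b₂).card ≤ 1 := by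
  obtain ⟨l, hl, rfl⟩ := mem_packingBlocks.mp h₁
  obtain ⟨m, hm, rfl⟩ := mem_packingBlocks.mp h₂
  have hlm : l ≠ m := fun h => hne (congrArg _ h)
  have hsymm : Std.Symm fun l m : List (Fin 24) => (l.toFinset ∩ m.toFinset).card ≤ 1 :=
    ⟨fun l m h => by simpa only [Finset.inter_comm] using h⟩
  exact blocks_pairwise_inter.forall hl hm hlm

theorem packingBlocks_card : packingBlocks.card = 42 := by
  have hnd : (blockList.map List.toFinset).Nodup := by
    refine List.pairwise_map.mpr (blocks_pairwise_inter.imp_of_mem ?_)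
    -- Equal blocks would share all four of their points.
    intro l m hl _ h heq
    rw [← heq, Finset.inter_self, card_toFinset_of_mem hl] at h
    omega
  rw [packingBlocks, List.toFinset_card_of_nodup hnd, List.length_map]
  rfl

theorem leave_iff (p q : Fin 24) : LeaveAdj packingBlocks p q ↔
    ∃ i k, (p = cyclePoint i k ∧ q = cyclePoint i (k + 1)) ∨
      (q = cyclePoint i k ∧ p = cyclePoint i (k + 1)) := by
  have hleave : LeaveAdj packingBlocks p q ↔ (q = next p ∨ p = next q) := by
    rw [← leave_iff_next]
    simp [LeaveAdj, mem_packingBlocks]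
  rw [hleave]
  constructor
  · rintro (h | h)
    · obtain ⟨⟨i, k⟩, rfl⟩ := cyclePoint_bijective.2 p
      exact ⟨i, k, Or.inl ⟨rfl, h.trans (cyclePoint_add_one i k).symm⟩⟩
    · obtain ⟨⟨i, k⟩, rfl⟩ := cyclePoint_bijective.2 q
      exact ⟨i, k, Or.inr ⟨rfl, h.trans (cyclePoint_add_one i k).symm⟩⟩
  · rintro ⟨i, k, ⟨rfl, rfl⟩ | ⟨rfl, rfl⟩⟩
    · exact Or.inl (cyclePoint_add_one i k)
    · exact Or.inr (cyclePoint_add_one i k)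

theorem isPacking_packingBlocks : IsPacking packingBlocks := by
  refine ⟨fun b hb => ?_, fun p q hpq b₁ h₁ b₂ h₂ hp₁ hq₁ hp₂ hq₂ => ?_⟩
  · obtain ⟨l, hl, rfl⟩ := mem_packingBlocks.mp hb
    exact card_toFinset_of_mem hl
  · by_contra hne
    exact hpq (Finset.card_le_one.mp (blocks_inter h₁ h₂ hne) p
      (Finset.mem_inter.mpr ⟨hp₁, hp₂⟩) q (Finset.mem_inter.mpr ⟨hq₁, hq₂⟩))

theorem leaveIsCycleType_packingBlocks : LeaveIsCycleType packingBlocks [12, 12] := by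
  -- `ZMod (L.get i)` is `ZMod 12` definitionally only once `i` is a numeral, so `i` is split.
  let f : (i : Fin [12, 12].length) → ZMod ([12, 12].get i) → Fin 24
    | 0 => cyclePoint 0
    | 1 => cyclePoint 1
  refine ⟨f, ⟨?_, ?_⟩, fun p q => (leave_iff p q).trans ?_⟩
  · rintro ⟨i, k⟩ ⟨j, l⟩ h
    match i, j, k, l, h with
    | 0, 0, k, l, h =>
      have := cyclePoint_bijective.1 (a₁ := (0, k)) (a₂ := (0, l)) h
      cases this; rfl
    | 0, 1, k, l, h =>
      have := cyclePoint_bijective.1 (a₁ := (0, k)) (a₂ := (1, l)) h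
      simp at this
    | 1, 0, k, l, h =>
      have := cyclePoint_bijective.1 (a₁ := (1, k)) (a₂ := (0, l)) h
      simp at this
    | 1, 1, k, l, h =>
      have := cyclePoint_bijective.1 (a₁ := (1, k)) (a₂ := (1, l)) h
      cases this; rfl
  · intro p
    obtain ⟨⟨i, k⟩, h⟩ := cyclePoint_bijective.2 p
    match i, h with
    | 0, h => exact ⟨⟨0, k⟩, h⟩
    | 1, h => exact ⟨⟨1, k⟩, h⟩
  · constructor
    · rintro ⟨i, k, h⟩
      match i, h with
      | 0, h => exact ⟨0, k, h⟩
      | 1, h => exact ⟨1, k, h⟩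
    · rintro ⟨i, k, h⟩
      match i, k, h with
      | 0, k, h => exact ⟨0, k, h⟩
      | 1, k, h => exact ⟨1, k, h⟩

/-- There is a 2-(24,4,1) packing with 42 blocks whose leave is a vertex-disjoint
union of cycles of lengths [12, 12], covering all 24 points. -/
theorem exists_max_packing_with_leave_type :
    ∃ B : Finset (Finset (Fin 24)), IsPacking B ∧ B.card = 42 ∧
      LeaveIsCycleType B [12, 12] :=
  ⟨packingBlocks, isPacking_packingBlocks, packingBlocks_card, leaveIsCycleType_packingBlocks⟩
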